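/- For all i, j, k ∈ ℕ, the element (A♮)^i (D♮)^j (B♮)^k of F[a,b,c] ⊗ U(sl₂) lies in the sum of the subspaces F[a,b,c] ⊗ U_n for −j−k ≤ n ≤ i+j; moreover, its component in F[a,b,c] ⊗ U_{i+j} equals R^{i+j} θ^k (θ − 1⊗1)^k ∏_{ℓ=1}^{j}(θ − ℓ·(1⊗1)), and its component in F[a,b,c] ⊗ U_{−j−k} equals ϑ^i (ϑ + 1⊗1)^i (∏_{ℓ=0}^{j−1}(ϑ − ℓ·(1⊗1))) L^{j+k}. -/

import Mathlib

open scoped TensorProduct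

noncomputable section

namespace RacahPaper

variable (F : Type) [Field F]

/-- Defining relations of `U(sl₂)`: generators `e = ι 0`, `f = ι 1`, `h = ι 2` with
`he - eh = 2e`, `hf - fh = -2f`, `ef - fe = h`. -/
inductive slRel : FreeAlgebra F (Fin 3) → FreeAlgebra F (Fin 3) → Prop
  | he : slRel (FreeAlgebra.ι F 2 * FreeAlgebra.ι F 0 - FreeAlgebra.ι F 0 * FreeAlgebra.ι F 2)
      (2 * FreeAlgebra.ι F 0)
  | hf : slRel (FreeAlgebra.ι F 2 * FreeAlgebra.ι F 1 - FreeAlgebra.ι F 1 * FreeAlgebra.ι F 2)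
      (-(2 * FreeAlgebra.ι F 1))
  | ef : slRel (FreeAlgebra.ι F 0 * FreeAlgebra.ι F 1 - FreeAlgebra.ι F 1 * FreeAlgebra.ι F 0)
      (FreeAlgebra.ι F 2)

/-- The universal enveloping algebra `U(sl₂)`. -/
abbrev U := RingQuot (slRel F)

/-- The generator `e` of `U(sl₂)`. -/
def e : U F := RingQuot.mkAlgHom F (slRel F) (FreeAlgebra.ι F 0)

/-- The generator `f` of `U(sl₂)`. -/
def f : U F := RingQuot.mkAlgHom F (slRel F) (FreeAlgebra.ι F 1)

/-- The generator `h` of `U(sl₂)`. -/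
def h : U F := RingQuot.mkAlgHom F (slRel F) (FreeAlgebra.ι F 2)

/-- The equitable generator `x = -f - h/2`. -/
def ux : U F := -f F - (2 : F)⁻¹ • h F

/-- The equitable generator `y = h/2`. -/
def uy : U F := (2 : F)⁻¹ • h F

/-- The equitable generator `z = e - h/2`. -/
def uz : U F := e F - (2 : F)⁻¹ • h F

/-- The normalized Casimir element `Λ = ef + h(h-2)/4` of `U(sl₂)`. -/
def Lam : U F := e F * f F + (4 : F)⁻¹ • (h F * (h F - 2))

/-- `ν_x = f/2`. -/
def nux : U F := (2 : F)⁻¹ • f F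

/-- `ν_z = e/2`. -/
def nuz : U F := (2 : F)⁻¹ • e F

/-- `U_n`: the span of the `e^i h^j f^k` with `k - i = n`. -/
def Usub (n : ℤ) : Submodule F (U F) :=
  Submodule.span F {u : U F | ∃ i j k : ℕ, (k : ℤ) - (i : ℤ) = n ∧ u = e F ^ i * h F ^ j * f F ^ k}

-- Racah algebra
/-- Generator `A` of the free algebra. -/
def fA : FreeAlgebra F (Fin 4) := FreeAlgebra.ι F 0
/-- Generator `B` of the free algebra. -/
def fB : FreeAlgebra F (Fin 4) := FreeAlgebra.ι F 1
/-- Generator `C` of the free algebra. -/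
def fC : FreeAlgebra F (Fin 4) := FreeAlgebra.ι F 2
/-- Generator `D` of the free algebra. -/
def fD : FreeAlgebra F (Fin 4) := FreeAlgebra.ι F 3

/-- `α = [A,D] + AC - BA` in the free algebra. -/
def falpha : FreeAlgebra F (Fin 4) := (fA F * fD F - fD F * fA F) + fA F * fC F - fB F * fA F
/-- `β = [B,D] + BA - CB` in the free algebra. -/
def fbeta : FreeAlgebra F (Fin 4) := (fB F * fD F - fD F * fB F) + fB F * fA F - fC F * fB F
/-- `γ = [C,D] + CB - AC` in the free algebra. -/
def fgamma : FreeAlgebra F (Fin 4) := (fC F * fD F - fD F * fC F) + fC F * fB F - fA F * fC F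

/-- Defining relations of the Racah algebra: `[A,B] = [B,C] = [C,A] = 2D` and each of
`α, β, γ` commutes with each of the generators `A, B, C, D`. -/
inductive racahRel : FreeAlgebra F (Fin 4) → FreeAlgebra F (Fin 4) → Prop
  | AB : racahRel (fA F * fB F - fB F * fA F) (2 * fD F)
  | BC : racahRel (fB F * fC F - fC F * fB F) (2 * fD F)
  | CA : racahRel (fC F * fA F - fA F * fC F) (2 * fD F)
  | calpha (i : Fin 4) : racahRel (falpha F * FreeAlgebra.ι F i) (FreeAlgebra.ι F i * falpha F)
  | cbeta (i : Fin 4) : racahRel (fbeta F * FreeAlgebra.ι F i) (FreeAlgebra.ι F i * fbeta F)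
  | cgamma (i : Fin 4) : racahRel (fgamma F * FreeAlgebra.ι F i) (FreeAlgebra.ι F i * fgamma F)

/-- The Racah algebra `ℜ`. -/
abbrev Racah := RingQuot (racahRel F)

/-- Generator `A` of the Racah algebra. -/
def A : Racah F := RingQuot.mkAlgHom F (racahRel F) (fA F)
/-- Generator `B` of the Racah algebra. -/
def B : Racah F := RingQuot.mkAlgHom F (racahRel F) (fB F)
/-- Generator `C` of the Racah algebra. -/
def C : Racah F := RingQuot.mkAlgHom F (racahRel F) (fC F)
/-- Generator `D` of the Racah algebra. -/
def D : Racah F := RingQuot.mkAlgHom F (racahRel F) (fD F)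

/-- `α = [A,D] + AC - BA` in the Racah algebra. -/
def alpha : Racah F := (A F * D F - D F * A F) + A F * C F - B F * A F
/-- `β = [B,D] + BA - CB` in the Racah algebra. -/
def beta : Racah F := (B F * D F - D F * B F) + B F * A F - C F * B F
/-- `γ = [C,D] + CB - AC` in the Racah algebra. -/
def gamma : Racah F := (C F * D F - D F * C F) + C F * B F - A F * C F
/-- `δ = A + B + C` in the Racah algebra. -/
def delta : Racah F := A F + B F + C F

/-- `Ω_A = D² + (BAC + CAB)/2 + A² + Bγ - Cβ - Aδ`. -/
def OmegaA : Racah F :=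
  D F ^ 2 + (2 : F)⁻¹ • (B F * A F * C F + C F * A F * B F) + A F ^ 2
    + B F * gamma F - C F * beta F - A F * delta F

/-- `Ω_B = D² + (CBA + ABC)/2 + B² + Cα - Aγ - Bδ`. -/
def OmegaB : Racah F :=
  D F ^ 2 + (2 : F)⁻¹ • (C F * B F * A F + A F * B F * C F) + B F ^ 2
    + C F * alpha F - A F * gamma F - B F * delta F

/-- `Ω_C = D² + (ACB + BCA)/2 + C² + Aβ - Bα - Cδ`. -/
def OmegaC : Racah F :=
  D F ^ 2 + (2 : F)⁻¹ • (A F * C F * B F + B F * C F * A F) + C F ^ 2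
    + A F * beta F - B F * alpha F - C F * delta F

-- the tensor algebra F[a,b,c] ⊗ U(sl2)
/-- The polynomial algebra `F[a,b,c]`. -/
abbrev P := MvPolynomial (Fin 3) F

/-- The tensor product algebra `F[a,b,c] ⊗ U(sl₂)`. -/
abbrev T := P F ⊗[F] U F

/-- The indeterminate `a`. -/
def pa : P F := MvPolynomial.X 0
/-- The indeterminate `b`. -/
def pb : P F := MvPolynomial.X 1
/-- The indeterminate `c`. -/
def pc : P F := MvPolynomial.X 2

/-- `A♮`. -/
def Anat : T F :=
  (pa F * (pa F + 1)) ⊗ₜ[F] (1 : U F) + (pb F - pc F - pa F) ⊗ₜ[F] ux F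
    + (pa F + pb F - pc F + 1) ⊗ₜ[F] uy F - (1 : P F) ⊗ₜ[F] (ux F * uy F)

/-- `B♮`. -/
def Bnat : T F :=
  (pb F * (pb F + 1)) ⊗ₜ[F] (1 : U F) + (pc F - pa F - pb F) ⊗ₜ[F] uy F
    + (pb F + pc F - pa F + 1) ⊗ₜ[F] uz F - (1 : P F) ⊗ₜ[F] (uy F * uz F)

/-- `C♮`. -/
def Cnat : T F :=
  (pc F * (pc F + 1)) ⊗ₜ[F] (1 : U F) + (pa F - pb F - pc F) ⊗ₜ[F] uz F
    + (pc F + pa F - pb F + 1) ⊗ₜ[F] ux F - (1 : P F) ⊗ₜ[F] (uz F * ux F)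

/-- `D♮`. -/
def Dnat : T F :=
  (1 : P F) ⊗ₜ[F] (uz F * uy F * ux F + uz F * ux F)
    + (pc F + pb F * (pc F + pa F - pb F)) ⊗ₜ[F] ux F
    + (pa F + pc F * (pa F + pb F - pc F)) ⊗ₜ[F] uy F
    + (pb F + pa F * (pb F + pc F - pa F)) ⊗ₜ[F] uz F
    + (pb F - pc F) ⊗ₜ[F] (ux F * uy F)
    + (pc F - pa F) ⊗ₜ[F] (uy F * uz F)
    + (pa F - pb F) ⊗ₜ[F] (uz F * ux F)

/-- `R = 2 ⊗ yν_x + 2(c+a-b+1) ⊗ ν_x`. -/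
def Rel : T F :=
  (2 : P F) ⊗ₜ[F] (uy F * nux F) + (2 * (pc F + pa F - pb F + 1)) ⊗ₜ[F] nux F

/-- `L = -2 ⊗ yν_z - 2(a-b-c-1) ⊗ ν_z`. -/
def Lel : T F :=
  -((2 : P F) ⊗ₜ[F] (uy F * nuz F)) - (2 * (pa F - pb F - pc F - 1)) ⊗ₜ[F] nuz F

/-- `θ = 1⊗y - b⊗1`. -/
def theta : T F := (1 : P F) ⊗ₜ[F] uy F - pb F ⊗ₜ[F] (1 : U F)

/-- `ϑ = 1⊗y + a⊗1`. -/
def vartheta : T F := (1 : P F) ⊗ₜ[F] uy F + pa F ⊗ₜ[F] (1 : U F)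

/-- `F[a,b,c] ⊗ U_n` as a subspace of `F[a,b,c] ⊗ U(sl₂)`. -/
def TU (n : ℤ) : Submodule F (T F) :=
  Submodule.span F {t : T F | ∃ (p : P F) (u : U F), u ∈ Usub F n ∧ t = p ⊗ₜ[F] u}

/-!
`A♮ = ϑ(ϑ + 1) + R`, `B♮ = L + θ(θ - 1)` and `D♮ = ϑL + D₀ + R(θ - 1)`, where `θ`, `ϑ`, `D₀` have
degree `0` and `R`, `L` have degrees `1`, `-1`. Components of extreme degree multiply, so those of
`(A♮)^i (D♮)^j (B♮)^k` are `(ϑ(ϑ + 1))^i (ϑL)^j L^k` and `R^i (R(θ - 1))^j (θ(θ - 1))^k`. Finally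
`Rθ = (θ + 1)R` and `Lϑ = (ϑ - 1)L`, so collecting the `R` on the left and the `L` on the right
turns `(R(θ - 1))^j` and `(ϑL)^j` into falling factorials.

All components are computed in the external direct sum `⨁ n, TU F n`, which makes the independence
of the subspaces `TU F n` unnecessary.
-/

section ShiftIdentities

variable {S : Type*} [Ring S]

theorem semiconjBy_pow_add_nsmul {r t z : S} (hrt : SemiconjBy r t (t + z)) (hrz : Commute r z)
    (n : ℕ) : SemiconjBy (r ^ n) t (t + n • z) := by
  induction n with
  | zero => simp
  | succ n ih =>
    rw [pow_succ', succ_nsmul', ← add_assoc]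
    exact (hrt.add_right (hrz.smul_right n)).mul_left ih

theorem commute_prod_map_range {t : S} {g : ℕ → S} (hg : ∀ l, Commute t (g l)) (j : ℕ) :
    Commute t ((List.range j).map g).prod :=
  Commute.list_prod_right _ _ <| List.forall_mem_map.2 fun l _ => hg l

theorem mul_pow_eq_prod_sub_natCast_mul_pow {l t : S} (hlt : SemiconjBy l t (t - 1)) (j : ℕ) :
    (t * l) ^ j = ((List.range j).map fun m : ℕ => t - m).prod * l ^ j := by
  induction j with
  | zero => simp
  | succ j ih =>
    have hj : l ^ j * t = (t - j) * l ^ j := by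
      rw [sub_eq_add_neg] at hlt
      simpa [sub_eq_add_neg] using
        (semiconjBy_pow_add_nsmul hlt (Commute.neg_one_right l) j).eq
    rw [List.prod_range_succ, pow_succ, ih, mul_assoc, ← mul_assoc (l ^ j), hj, pow_succ]
    simp only [mul_assoc]

theorem mul_pow_eq_pow_mul_prod_sub_natCast {r t : S} (hrt : SemiconjBy r t (t + 1)) (j : ℕ) :
    (r * t) ^ j = r ^ j * ((List.range j).map fun m : ℕ => t - m).prod := by
  induction j with
  | zero => simp
  | succ j ih =>
    have hj : t * r ^ j = r ^ j * (t - j) := by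
      have hpow : r ^ j * t = (t + j) * r ^ j := by
        simpa using (semiconjBy_pow_add_nsmul hrt (Commute.one_right r) j).eq
      rw [mul_sub, hpow, add_mul, (Nat.cast_commute j _).eq, add_sub_cancel_right]
    have hcomm : Commute (t - j) ((List.range j).map fun m : ℕ => t - m).prod :=
      commute_prod_map_range (fun m => ((Commute.refl t).sub_right (Nat.commute_cast t m)).sub_left
        (Nat.cast_commute j _)) j
    rw [List.prod_range_succ, pow_succ', ih, mul_assoc, ← mul_assoc t, hj, pow_succ', ← hcomm.eq]
    simp only [mul_assoc]

end ShiftIdentities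

section HasExtremes

open DirectSum

section Add

variable {ι S σ : Type*} [AddCommMonoid S] [SetLike σ S] [AddSubmonoidClass σ S] {𝒜 : ι → σ}

/-- `HasExtremes x lo hi bot top` says that the components of `x` live in degrees between `lo` and
`hi`, and that the components of degrees `lo` and `hi`, which may be zero, are `bot` and `top`. -/
structure HasExtremes [Preorder ι] (x : ⨁ n, 𝒜 n) (lo hi : ι) (bot top : S) : Prop where
  mem_Icc : ∀ n, x n ≠ 0 → n ∈ Set.Icc lo hi
  coe_lo : (x lo : S) = bot
  coe_hi : (x hi : S) = top

theorem hasExtremes_of_add_add [DecidableEq ι] [PartialOrder ι] {lo hi : ι} (hlt : lo < hi)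
    (b : 𝒜 lo) (t : 𝒜 hi) {m : ⨁ n, 𝒜 n} (hm : ∀ n, m n ≠ 0 → n ∈ Set.Ioo lo hi) :
    HasExtremes (of (fun n => 𝒜 n) lo b + m + of (fun n => 𝒜 n) hi t) lo hi b t := by
  have hlo : m lo = 0 := by
    by_contra h
    exact (hm lo h).1.false
  have hhi : m hi = 0 := by
    by_contra h
    exact (hm hi h).2.false
  refine ⟨fun n => ?_, ?_, ?_⟩
  · contrapose!
    intro hn
    have hmn : m n = 0 := by
      by_contra h
      exact hn (Set.Ioo_subset_Icc_self (hm n h))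
    have hnlo : n ≠ lo := by
      rintro rfl
      exact hn ⟨le_rfl, hlt.le⟩
    have hnhi : n ≠ hi := by
      rintro rfl
      exact hn ⟨hlt.le, le_rfl⟩
    simp [hmn, of_eq_of_ne _ _ _ hnlo, of_eq_of_ne _ _ _ hnhi]
  · simp [hlo, of_eq_of_ne _ _ _ hlt.ne]
  · simp [hhi, of_eq_of_ne _ _ _ hlt.ne']

end Add

variable {ι S σ : Type*} [Semiring S] [SetLike σ S] [AddSubmonoidClass σ S] {𝒜 : ι → σ}

section Mul

variable [DecidableEq ι] [AddMonoid ι] [SetLike.GradedMonoid 𝒜]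

theorem exists_add_eq_of_mul_apply_ne_zero {x y : ⨁ n, 𝒜 n} {n : ι} (hn : (x * y) n ≠ 0) :
    ∃ a b, x a ≠ 0 ∧ y b ≠ 0 ∧ a + b = n := by
  classical
  rw [Ne, ← ZeroMemClass.coe_eq_zero, coe_mul_apply] at hn
  obtain ⟨⟨a, b⟩, hab, -⟩ := Finset.exists_ne_zero_of_sum_ne_zero hn
  simp only [Finset.mem_filter, Finset.mem_product, DFinsupp.mem_support_iff] at hab
  exact ⟨a, b, hab.1.1, hab.1.2, hab.2⟩

theorem coe_mul_apply_add_of_unique {x y : ⨁ n, 𝒜 n} {a b : ι}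
    (hab : ∀ m n, x m ≠ 0 → y n ≠ 0 → m + n = a + b → m = a ∧ n = b) :
    ((x * y) (a + b) : S) = x a * y b := by
  classical
  rw [coe_mul_apply]
  refine Finset.sum_eq_single (a, b) ?_ ?_
  · rintro ⟨m, n⟩ hmn hne
    simp only [Finset.mem_filter, Finset.mem_product, DFinsupp.mem_support_iff] at hmn
    exact (hne (Prod.ext_iff.2 (hab m n hmn.1.1 hmn.1.2 hmn.2))).elim
  · intro hnot
    simp only [Finset.mem_filter, Finset.mem_product, DFinsupp.mem_support_iff, and_true,
      not_and_or, not_not] at hnot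
    rcases hnot with h | h <;> simp [h]

end Mul

namespace HasExtremes

variable [DecidableEq ι] [AddCommMonoid ι] [PartialOrder ι] [SetLike.GradedMonoid 𝒜]
  {x y : ⨁ n, 𝒜 n} {lo hi lo' hi' : ι} {bot top bot' top' : S}

theorem one : HasExtremes (1 : ⨁ n, 𝒜 n) 0 0 1 1 := by
  have hone : (((1 : ⨁ n, 𝒜 n) 0 : 𝒜 0) : S) = 1 := by
    rw [one_def, of_eq_same]
    rfl
  refine ⟨fun n => ?_, hone, hone⟩
  contrapose!
  intro hn
  exact of_eq_of_ne _ _ _ fun h => hn (by simp [h])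

theorem mul [IsOrderedCancelAddMonoid ι] (hx : HasExtremes x lo hi bot top)
    (hy : HasExtremes y lo' hi' bot' top') :
    HasExtremes (x * y) (lo + lo') (hi + hi') (bot * bot') (top * top') := by
  refine ⟨fun n hn => ?_, ?_, ?_⟩
  · obtain ⟨a, b, ha, hb, rfl⟩ := exists_add_eq_of_mul_apply_ne_zero hn
    exact ⟨add_le_add (hx.mem_Icc a ha).1 (hy.mem_Icc b hb).1,
      add_le_add (hx.mem_Icc a ha).2 (hy.mem_Icc b hb).2⟩
  · rw [coe_mul_apply_add_of_unique, hx.coe_lo, hy.coe_lo]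
    intro m n hm hn hmn
    exact ((add_eq_add_iff_eq_and_eq (hx.mem_Icc m hm).1 (hy.mem_Icc n hn).1).1 hmn.symm).imp
      Eq.symm Eq.symm
  · rw [coe_mul_apply_add_of_unique, hx.coe_hi, hy.coe_hi]
    intro m n hm hn hmn
    exact (add_eq_add_iff_eq_and_eq (hx.mem_Icc m hm).2 (hy.mem_Icc n hn).2).1 hmn

theorem pow [IsOrderedCancelAddMonoid ι] (hx : HasExtremes x lo hi bot top) (n : ℕ) :
    HasExtremes (x ^ n) (n • lo) (n • hi) (bot ^ n) (top ^ n) := by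
  induction n with
  | zero => simpa using one
  | succ n ih => simpa only [pow_succ, succ_nsmul] using ih.mul hx

theorem coeRingHom_eq_sum [LocallyFiniteOrder ι] (hx : HasExtremes x lo hi bot top) :
    coeRingHom 𝒜 x = ∑ n ∈ Finset.Icc lo hi, (x n : S) := by
  classical
  refine (coeAddMonoidHom_eq_dfinsuppSum 𝒜 x).trans (Finset.sum_subset (fun n hn => ?_) ?_)
  · exact Finset.mem_Icc.2 (hx.mem_Icc n (DFinsupp.mem_support_iff.1 hn))
  · intro n _ hn
    exact ZeroMemClass.coe_eq_zero.2 (DFinsupp.notMem_support_iff.1 hn)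

end HasExtremes

end HasExtremes

section LeftMultipliers

variable {ι R S : Type*} [AddMonoid ι] [CommSemiring R] [Semiring S] [Algebra R S]

/-- The elements of `S` whose left multiplication sends `𝒜 n` into `𝒜 (d + n)` for all `n`. They
form a graded monoid whatever the family `𝒜`, so gradedness of `𝒜` can be checked on generators. -/
def leftMultipliers (𝒜 : ι → Submodule R S) (d : ι) : Submodule R S where
  carrier := {s | ∀ n, ∀ u ∈ 𝒜 n, s * u ∈ 𝒜 (d + n)}
  add_mem' hs ht n u hu := by
    rw [add_mul]
    exact add_mem (hs n u hu) (ht n u hu)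
  zero_mem' n u _ := by
    rw [zero_mul]
    exact zero_mem _
  smul_mem' c s hs n u hu := by
    rw [smul_mul_assoc]
    exact Submodule.smul_mem _ c (hs n u hu)

instance (𝒜 : ι → Submodule R S) : SetLike.GradedMonoid (leftMultipliers 𝒜) where
  one_mem n u hu := by rwa [one_mul, zero_add]
  mul_mem _ _ s t hs ht n u hu := by
    rw [mul_assoc, add_assoc]
    exact hs _ _ (ht n u hu)

end LeftMultipliers

-- The coercion of lists is a monadic `do let a ← l; pure ↑a`, not a `List.map`.
theorem map_coe_list_natCast {R : Type} {S : Type*} [NatCast R] (g : R → S) (l : List ℕ) :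
    (l : List R).map g = l.map fun n : ℕ => g n := by
  simp [List.flatMap_assoc, List.map_eq_flatMap]

section UniversalEnvelopingAlgebra

theorem h_mul_e : h F * e F = e F * h F + 2 • e F := by
  have he := RingQuot.mkAlgHom_rel F (slRel.he (F := F))
  simp only [map_sub, map_mul, map_ofNat] at he
  rw [two_nsmul, ← two_mul]
  exact sub_eq_iff_eq_add'.1 he

theorem semiconjBy_f_h : SemiconjBy (f F) (h F) (h F + 2) := by
  have hf := RingQuot.mkAlgHom_rel F (slRel.hf (F := F))
  simp only [map_sub, map_mul, map_neg, map_ofNat] at hf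
  rw [SemiconjBy, add_mul]
  exact eq_add_of_sub_eq' ((neg_sub _ _).symm.trans (neg_eq_iff_eq_neg.2 hf))

theorem f_mul_e : f F * e F = e F * f F - h F := by
  have hef := RingQuot.mkAlgHom_rel F (slRel.ef (F := F))
  simp only [map_sub, map_mul] at hef
  rw [eq_sub_iff_add_eq']
  exact (sub_eq_iff_eq_add.1 hef).symm

variable {F}

theorem monomial_mem_Usub {i j k : ℕ} {n : ℤ} (hn : (k : ℤ) - i = n) :
    e F ^ i * h F ^ j * f F ^ k ∈ Usub F n :=
  Submodule.subset_span ⟨i, j, k, hn, rfl⟩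

theorem mem_leftMultipliers_Usub {u : U F} {d : ℤ}
    (hu : ∀ i j k : ℕ, u * (e F ^ i * h F ^ j * f F ^ k) ∈ Usub F (d + (k - i))) :
    u ∈ leftMultipliers (Usub F) d := fun n v hv => by
  have hle : Usub F n ≤ (Usub F (d + n)).comap (LinearMap.mulLeft F u) := by
    refine Submodule.span_le.2 ?_
    rintro _ ⟨i, j, k, rfl, rfl⟩
    exact hu i j k
  exact hle hv

theorem e_mem_leftMultipliers : e F ∈ leftMultipliers (Usub F) (-1) := by
  refine mem_leftMultipliers_Usub fun i j k => ?_
  rw [← mul_assoc, ← mul_assoc, ← pow_succ']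
  exact monomial_mem_Usub (by push_cast; ring)

theorem h_mem_leftMultipliers : h F ∈ leftMultipliers (Usub F) 0 := by
  refine mem_leftMultipliers_Usub fun i j k => ?_
  induction i with
  | zero =>
    have hsplit : h F * (e F ^ 0 * h F ^ j * f F ^ k) = e F ^ 0 * h F ^ (j + 1) * f F ^ k := by
      simp only [pow_zero, one_mul, pow_succ', mul_assoc]
    rw [hsplit, zero_add]
    exact monomial_mem_Usub rfl
  | succ i ih =>
    have hsplit : h F * (e F ^ (i + 1) * h F ^ j * f F ^ k) =
        e F * (h F * (e F ^ i * h F ^ j * f F ^ k)) + 2 • (e F ^ (i + 1) * h F ^ j * f F ^ k) := by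
      rw [pow_succ']
      simp only [← mul_assoc]
      rw [h_mul_e]
      simp only [add_mul, smul_mul_assoc]
    rw [hsplit]
    refine add_mem ?_ (nsmul_mem (monomial_mem_Usub (zero_add _).symm) 2)
    convert e_mem_leftMultipliers _ _ ih using 2
    push_cast
    ring

theorem f_mem_leftMultipliers : f F ∈ leftMultipliers (Usub F) 1 := by
  refine mem_leftMultipliers_Usub fun i j k => ?_
  induction i with
  | zero =>
    have hshift : f F * (e F ^ 0 * h F ^ j * f F ^ k) =
        (h F + 2) ^ j * (e F ^ 0 * h F ^ 0 * f F ^ (k + 1)) := by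
      rw [pow_zero, pow_zero, one_mul, one_mul, one_mul, ← mul_assoc,
        ((semiconjBy_f_h F).pow_right j).eq, mul_assoc, pow_succ']
    have hpow : (h F + 2) ^ j ∈ leftMultipliers (Usub F) (j • 0) :=
      SetLike.pow_mem_graded j
        (add_mem h_mem_leftMultipliers (SetLike.natCast_mem_graded (leftMultipliers (Usub F)) 2))
    rw [hshift]
    convert hpow _ _ (monomial_mem_Usub rfl) using 2
    push_cast
    ring
  | succ i ih =>
    have hsplit : f F * (e F ^ (i + 1) * h F ^ j * f F ^ k) =
        e F * (f F * (e F ^ i * h F ^ j * f F ^ k)) - h F * (e F ^ i * h F ^ j * f F ^ k) := by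
      rw [pow_succ']
      simp only [← mul_assoc]
      rw [f_mul_e]
      simp only [sub_mul]
    rw [hsplit]
    refine sub_mem ?_ ?_
    · convert e_mem_leftMultipliers _ _ ih using 2
      push_cast
      ring
    · convert h_mem_leftMultipliers _ _ (monomial_mem_Usub rfl) using 2
      push_cast
      ring

theorem Usub_le_leftMultipliers (n : ℤ) : Usub F n ≤ leftMultipliers (Usub F) n := by
  refine Submodule.span_le.2 ?_
  rintro _ ⟨i, j, k, rfl, rfl⟩
  have hmem := SetLike.mul_mem_graded
    (SetLike.mul_mem_graded (SetLike.pow_mem_graded i (e_mem_leftMultipliers (F := F)))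
      (SetLike.pow_mem_graded j h_mem_leftMultipliers))
    (SetLike.pow_mem_graded k f_mem_leftMultipliers)
  rw [SetLike.mem_coe]
  convert hmem using 2
  simp only [smul_neg, nsmul_eq_mul]
  ring

theorem e_mem_Usub : e F ∈ Usub F (-1) := by
  simpa using monomial_mem_Usub (F := F) (i := 1) (j := 0) (k := 0) rfl

theorem f_mem_Usub : f F ∈ Usub F 1 := by
  simpa using monomial_mem_Usub (F := F) (i := 0) (j := 0) (k := 1) rfl

theorem uy_mem_Usub : uy F ∈ Usub F 0 :=
  Submodule.smul_mem _ _ <| by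
    simpa using monomial_mem_Usub (F := F) (i := 0) (j := 1) (k := 0) rfl

instance : SetLike.GradedMonoid (Usub F) where
  one_mem := by simpa using monomial_mem_Usub (F := F) (i := 0) (j := 0) (k := 0) rfl
  mul_mem _ n _ v hu hv := Usub_le_leftMultipliers _ hu n v hv

theorem tmul_mem_TU (p : P F) {u : U F} {n : ℤ} (hu : u ∈ Usub F n) : p ⊗ₜ[F] u ∈ TU F n :=
  Submodule.subset_span ⟨p, u, hu, rfl⟩

instance : SetLike.GradedMonoid (TU F) where
  one_mem := tmul_mem_TU 1 (SetLike.one_mem_graded (Usub F))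
  mul_mem m n s t hs ht := by
    have hle : TU F m * TU F n ≤ TU F (m + n) := by
      rw [TU, TU, Submodule.span_mul_span, Submodule.span_le]
      rintro _ ⟨_, ⟨p, u, hu, rfl⟩, _, ⟨q, v, hv, rfl⟩, rfl⟩
      have hmem := tmul_mem_TU (p * q) (SetLike.mul_mem_graded hu hv)
      rwa [← Algebra.TensorProduct.tmul_mul_tmul] at hmem
    exact hle (Submodule.mul_mem_mul hs ht)

end UniversalEnvelopingAlgebra

section Decompositions

variable {F}

theorem uy_mul_e (hchar : (2 : F) ≠ 0) : uy F * e F = e F * uy F + e F := by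
  rw [uy, smul_mul_assoc, h_mul_e, smul_add, mul_smul_comm, ← ofNat_smul_eq_nsmul F 2,
    inv_smul_smul₀ hchar]

theorem f_mul_uy (hchar : (2 : F) ≠ 0) : f F * uy F = uy F * f F + f F := by
  rw [uy, mul_smul_comm, (semiconjBy_f_h F).eq, add_mul, smul_add, smul_mul_assoc, two_mul,
    ← two_smul F, inv_smul_smul₀ hchar]

local notation "ι" => (Algebra.TensorProduct.includeRight : U F →ₐ[F] T F)

theorem tmul_eq_smul_includeRight (p : P F) (u : U F) : p ⊗ₜ[F] u = p • ι u := by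
  simp [TensorProduct.smul_tmul']

theorem includeRight_f_mul_uy (hchar : (2 : F) ≠ 0) :
    ι (f F) * ι (uy F) = ι (uy F) * ι (f F) + ι (f F) := by
  rw [← map_mul, ← map_mul, ← map_add, f_mul_uy hchar]

theorem includeRight_e_mul_uy (hchar : (2 : F) ≠ 0) :
    ι (e F) * ι (uy F) = ι (uy F) * ι (e F) - ι (e F) := by
  rw [← map_mul, ← map_mul, eq_sub_iff_add_eq, ← map_add, uy_mul_e hchar]

-- The scalar `-1` stands in for negation, which on `T F` is not syntactically the one of its ring
-- structure, so that `neg_mul` and `mul_neg` would not fire.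
theorem includeRight_ux : ι (ux F) = (-1 : P F) • (ι (f F) + ι (uy F)) :=
  calc ι (ux F) = -ι (f F) - ι (uy F) :=
        (map_sub ι (-f F) (uy F)).trans (congrArg (· - _) (map_neg ι (f F)))
    _ = -(ι (f F) + ι (uy F)) := (neg_add' _ _).symm
    _ = (-1 : P F) • (ι (f F) + ι (uy F)) := (neg_one_smul (P F) _).symm

theorem includeRight_uz : ι (uz F) = ι (e F) - ι (uy F) :=
  map_sub ι (e F) (uy F)

theorem theta_eq : theta F = ι (uy F) - pb F • 1 := by
  simp only [theta, tmul_eq_smul_includeRight, map_one, one_smul]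

theorem vartheta_eq : vartheta F = ι (uy F) + pa F • 1 := by
  simp only [vartheta, tmul_eq_smul_includeRight, map_one, one_smul]

theorem two_mul_tmul_inv_two_smul (hchar : (2 : F) ≠ 0) (p : P F) (u : U F) :
    (2 * p) ⊗ₜ[F] ((2 : F)⁻¹ • u) = p ⊗ₜ[F] u := by
  rw [← TensorProduct.smul_tmul, two_mul, ← two_smul F, inv_smul_smul₀ hchar]

theorem Rel_eq (hchar : (2 : F) ≠ 0) :
    Rel F = ι (uy F) * ι (f F) + (pc F + pa F - pb F + 1) • ι (f F) := by
  rw [Rel, nux, mul_smul_comm, ← mul_one (2 : P F), two_mul_tmul_inv_two_smul hchar, mul_one,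
    two_mul_tmul_inv_two_smul hchar]
  simp only [tmul_eq_smul_includeRight, map_mul, one_smul]

theorem Lel_eq (hchar : (2 : F) ≠ 0) :
    Lel F = (pb F + pc F - pa F + 1) • ι (e F) - ι (uy F) * ι (e F) := by
  have hcoeff : pb F + pc F - pa F + 1 = -(pa F - pb F - pc F - 1) := by ring
  rw [Lel, nuz, mul_smul_comm, ← mul_one (2 : P F), two_mul_tmul_inv_two_smul hchar, mul_one,
    two_mul_tmul_inv_two_smul hchar, hcoeff]
  simp only [tmul_eq_smul_includeRight, map_mul, one_smul]
  exact (neg_sub_comm _ _).trans (congrArg (· - _) (neg_smul _ (ι (e F))).symm)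

theorem semiconjBy_Rel_theta (hchar : (2 : F) ≠ 0) :
    SemiconjBy (Rel F) (theta F) (theta F + 1) := by
  simp only [SemiconjBy, theta_eq, Rel_eq hchar, mul_add, add_mul, sub_mul, mul_sub,
    smul_mul_assoc, mul_smul_comm, one_mul, mul_one, includeRight_f_mul_uy hchar, mul_assoc]
  match_scalars <;> ring

theorem semiconjBy_Lel_vartheta (hchar : (2 : F) ≠ 0) :
    SemiconjBy (Lel F) (vartheta F) (vartheta F - 1) := by
  simp only [SemiconjBy, vartheta_eq, Lel_eq hchar, mul_add, add_mul, sub_mul, mul_sub,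
    smul_mul_assoc, mul_smul_comm, one_mul, mul_one, includeRight_e_mul_uy hchar, mul_assoc]
  match_scalars <;> ring

theorem Anat_eq (hchar : (2 : F) ≠ 0) : Anat F = vartheta F * (vartheta F + 1) + Rel F := by
  simp only [Anat, vartheta_eq, Rel_eq hchar, includeRight_ux, tmul_eq_smul_includeRight, map_mul,
    map_one, mul_add, add_mul, smul_mul_assoc, mul_smul_comm, one_mul, mul_one,
    includeRight_f_mul_uy hchar]
  match_scalars <;> ring

theorem Bnat_eq (hchar : (2 : F) ≠ 0) : Bnat F = Lel F + theta F * (theta F - 1) := by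
  simp only [Bnat, theta_eq, Lel_eq hchar, includeRight_uz, tmul_eq_smul_includeRight, map_mul,
    map_one, mul_sub, sub_mul, smul_mul_assoc, mul_smul_comm, one_mul, mul_one]
  match_scalars <;> ring

variable (F) in
/-- The component of `D♮` in `F[a,b,c] ⊗ U_0`. -/
def DnatZero : T F :=
  ι (uy F) * (ι (uy F) + (pa F - pb F - pc F) • 1) * (ι (uy F) + (pa F - pb F + pc F + 1) • 1)
    - ι (e F) * (ι (uy F) + (pa F - pb F + 1) • 1) * ι (f F)

theorem Dnat_eq (hchar : (2 : F) ≠ 0) :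
    Dnat F = vartheta F * Lel F + DnatZero F + Rel F * (theta F - 1) := by
  have hreassoc (t : T F) : ι (e F) * (ι (uy F) * t) = ι (uy F) * (ι (e F) * t) - ι (e F) * t := by
    rw [← mul_assoc, includeRight_e_mul_uy hchar, sub_mul, mul_assoc]
  simp only [Dnat, DnatZero, vartheta_eq, theta_eq, Lel_eq hchar, Rel_eq hchar, includeRight_ux,
    includeRight_uz, tmul_eq_smul_includeRight, map_mul, map_add, mul_add, add_mul, sub_mul,
    mul_sub, smul_mul_assoc, mul_smul_comm, one_mul, mul_one, includeRight_f_mul_uy hchar,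
    includeRight_e_mul_uy hchar, hreassoc, mul_assoc]
  match_scalars <;> ring

theorem theta_mem_TU : theta F ∈ TU F 0 := by
  unfold theta
  exact sub_mem (tmul_mem_TU _ uy_mem_Usub) (tmul_mem_TU _ (SetLike.one_mem_graded (Usub F)))

theorem theta_sub_one_mem_TU : theta F - 1 ∈ TU F 0 :=
  sub_mem theta_mem_TU (SetLike.one_mem_graded (TU F))

theorem vartheta_mem_TU : vartheta F ∈ TU F 0 := by
  unfold vartheta
  exact add_mem (tmul_mem_TU _ uy_mem_Usub) (tmul_mem_TU _ (SetLike.one_mem_graded (Usub F)))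

theorem Rel_mem_TU : Rel F ∈ TU F 1 := by
  have hnux : nux F ∈ Usub F 1 := Submodule.smul_mem _ _ f_mem_Usub
  have hyx : uy F * nux F ∈ Usub F 1 := by
    simpa using SetLike.mul_mem_graded uy_mem_Usub hnux
  unfold Rel
  exact add_mem (tmul_mem_TU _ hyx) (tmul_mem_TU _ hnux)

theorem Lel_mem_TU : Lel F ∈ TU F (-1) := by
  have hnuz : nuz F ∈ Usub F (-1) := Submodule.smul_mem _ _ e_mem_Usub
  have hyz : uy F * nuz F ∈ Usub F (-1) := by
    simpa using SetLike.mul_mem_graded uy_mem_Usub hnuz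
  unfold Lel
  exact sub_mem (neg_mem (tmul_mem_TU _ hyz)) (tmul_mem_TU _ hnuz)

theorem DnatZero_mem_TU : DnatZero F ∈ TU F 0 := by
  have hshift (p : P F) : ι (uy F) + p • 1 ∈ TU F 0 := by
    rw [← map_one ι, ← tmul_eq_smul_includeRight]
    exact add_mem (tmul_mem_TU 1 uy_mem_Usub)
      (tmul_mem_TU p (SetLike.one_mem_graded (Usub F)))
  have hy : ι (uy F) ∈ TU F 0 := tmul_mem_TU 1 uy_mem_Usub
  have he : ι (e F) ∈ TU F (-1) := tmul_mem_TU 1 e_mem_Usub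
  have hf : ι (f F) ∈ TU F 1 := tmul_mem_TU 1 f_mem_Usub
  refine sub_mem ?_ ?_
  · simpa using SetLike.mul_mem_graded (SetLike.mul_mem_graded hy (hshift _)) (hshift _)
  · simpa using SetLike.mul_mem_graded (SetLike.mul_mem_graded he (hshift _)) hf

end Decompositions

section Extremes

open DirectSum

variable {F}

theorem exists_hasExtremes_Anat (hchar : (2 : F) ≠ 0) :
    ∃ x, coeRingHom (TU F) x = Anat F ∧
      HasExtremes x 0 1 (vartheta F * (vartheta F + 1)) (Rel F) := by
  have hbot : vartheta F * (vartheta F + 1) ∈ TU F 0 := by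
    simpa using SetLike.mul_mem_graded vartheta_mem_TU
      (add_mem vartheta_mem_TU (SetLike.one_mem_graded (TU F)))
  refine ⟨_, ?_, hasExtremes_of_add_add zero_lt_one ⟨_, hbot⟩ ⟨_, Rel_mem_TU⟩ (m := 0) (by simp)⟩
  simp [Anat_eq hchar]

theorem exists_hasExtremes_Bnat (hchar : (2 : F) ≠ 0) :
    ∃ x, coeRingHom (TU F) x = Bnat F ∧
      HasExtremes x (-1) 0 (Lel F) (theta F * (theta F - 1)) := by
  have htop : theta F * (theta F - 1) ∈ TU F 0 := by
    simpa using SetLike.mul_mem_graded theta_mem_TU theta_sub_one_mem_TU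
  refine ⟨_, ?_, hasExtremes_of_add_add neg_one_lt_zero ⟨_, Lel_mem_TU⟩ ⟨_, htop⟩ (m := 0)
    (by simp)⟩
  simp [Bnat_eq hchar]

theorem exists_hasExtremes_Dnat (hchar : (2 : F) ≠ 0) :
    ∃ x, coeRingHom (TU F) x = Dnat F ∧
      HasExtremes x (-1) 1 (vartheta F * Lel F) (Rel F * (theta F - 1)) := by
  have hbot : vartheta F * Lel F ∈ TU F (-1) := by
    simpa using SetLike.mul_mem_graded vartheta_mem_TU Lel_mem_TU
  have htop : Rel F * (theta F - 1) ∈ TU F 1 := by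
    simpa using SetLike.mul_mem_graded Rel_mem_TU theta_sub_one_mem_TU
  refine ⟨_, ?_, hasExtremes_of_add_add (by decide) ⟨_, hbot⟩ ⟨_, htop⟩
    (m := of (fun n => TU F n) 0 ⟨_, DnatZero_mem_TU⟩) fun n hn => ?_⟩
  · simp [Dnat_eq hchar]
  · obtain rfl : n = 0 := by
      by_contra h
      exact hn (of_eq_of_ne _ _ _ h)
    decide

theorem exists_hasExtremes_mul (hchar : (2 : F) ≠ 0) (i j k : ℕ) :
    ∃ x, coeRingHom (TU F) x = Anat F ^ i * Dnat F ^ j * Bnat F ^ k ∧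
      HasExtremes x (-(j : ℤ) - k) (i + j)
        ((vartheta F * (vartheta F + 1)) ^ i * (vartheta F * Lel F) ^ j * Lel F ^ k)
        (Rel F ^ i * (Rel F * (theta F - 1)) ^ j * (theta F * (theta F - 1)) ^ k) := by
  obtain ⟨x, hx, hxe⟩ := exists_hasExtremes_Anat hchar
  obtain ⟨y, hy, hye⟩ := exists_hasExtremes_Dnat hchar
  obtain ⟨z, hz, hze⟩ := exists_hasExtremes_Bnat hchar
  refine ⟨x ^ i * y ^ j * z ^ k, by simp only [map_mul, map_pow, hx, hy, hz], ?_⟩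
  convert ((hxe.pow i).mul (hye.pow j)).mul (hze.pow k) using 1
  · simp [sub_eq_add_neg]
  · simp

theorem top_component_eq (hchar : (2 : F) ≠ 0) (i j k : ℕ) :
    Rel F ^ i * (Rel F * (theta F - 1)) ^ j * (theta F * (theta F - 1)) ^ k =
      Rel F ^ (i + j) * theta F ^ k * (theta F - 1) ^ k *
        ((List.range j).map fun l : ℕ => theta F - (l + 1)).prod := by
  have hcomm : Commute (theta F) (theta F - 1) := (Commute.refl _).sub_right (Commute.one_right _)
  have hshift : SemiconjBy (Rel F) (theta F - 1) (theta F - 1 + 1) := by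
    simpa using (semiconjBy_Rel_theta hchar).sub_right (SemiconjBy.one_right _)
  have hfactor (l : ℕ) : Commute (theta F * (theta F - 1)) (theta F - 1 - l) :=
    (hcomm.mul_left (Commute.refl _)).sub_right (Nat.commute_cast _ l)
  simp only [← sub_sub, add_comm _ (1 : T F)]
  rw [mul_pow_eq_pow_mul_prod_sub_natCast hshift, ← mul_assoc, ← pow_add, mul_assoc,
    ← ((commute_prod_map_range hfactor j).pow_left k).eq, hcomm.mul_pow]
  simp only [mul_assoc]

theorem bot_component_eq (hchar : (2 : F) ≠ 0) (i j k : ℕ) :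
    (vartheta F * (vartheta F + 1)) ^ i * (vartheta F * Lel F) ^ j * Lel F ^ k =
      vartheta F ^ i * (vartheta F + 1) ^ i *
        ((List.range j).map fun l : ℕ => vartheta F - l).prod * Lel F ^ (j + k) := by
  have hcomm : Commute (vartheta F) (vartheta F + 1) :=
    (Commute.refl _).add_right (Commute.one_right _)
  rw [mul_pow_eq_prod_sub_natCast_mul_pow (semiconjBy_Lel_vartheta hchar), hcomm.mul_pow, pow_add]
  simp only [mul_assoc]

end Extremes

theorem statement19 (hchar : (2 : F) ≠ 0) (i j k : ℕ) :
    ∃ t : ℤ → T F,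
      (∀ n : ℤ, t n ∈ TU F n) ∧
      (∀ n : ℤ, (n < -(j : ℤ) - (k : ℤ) ∨ (i : ℤ) + (j : ℤ) < n) → t n = 0) ∧
      Anat F ^ i * Dnat F ^ j * Bnat F ^ k
        = ∑ n ∈ Finset.Icc (-(j : ℤ) - (k : ℤ)) ((i : ℤ) + (j : ℤ)), t n ∧
      t ((i : ℤ) + (j : ℤ))
        = Rel F ^ (i + j) * theta F ^ k * (theta F - 1) ^ k *
            ((List.range j).map fun l => theta F - ((l : T F) + 1)).prod ∧
      t (-(j : ℤ) - (k : ℤ))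
        = vartheta F ^ i * (vartheta F + 1) ^ i *
            ((List.range j).map fun l => vartheta F - (l : T F)).prod * Lel F ^ (j + k) := by
  obtain ⟨x, hx, hxe⟩ := exists_hasExtremes_mul hchar i j k
  refine ⟨fun n => x n, fun n => (x n).2, fun n hn => ?_, ?_, ?_, ?_⟩
  · by_contra hne
    have hmem := hxe.mem_Icc n fun h => hne (by simp [h])
    exact hn.elim hmem.1.not_gt hmem.2.not_gt
  · rw [← hx, hxe.coeRingHom_eq_sum]
  · rw [map_coe_list_natCast, ← top_component_eq hchar]
    exact hxe.coe_hi
  · rw [map_coe_list_natCast, ← bot_component_eq hchar]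
    exact hxe.coe_lo

end RacahPaper
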